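/- arXiv:2406.12811 — 3 statements merged into one kernel-verified Lean document; each statement's English description precedes it below -/
import Mathlib

section
/- Let (M, O, O*) be a finitary binary oriented matroid with ground set E, and suppose 𝒜 is a set of positive signed circuits in O whose domains are pairwise disjoint and whose domains have union E. Then for every D ∈ O*, the sets D⁺ = {e ∈ dom(D) : D(e) = +1} and D⁻ = {e ∈ dom(D) : D(e) = −1} have the same cardinality; moreover, for every positive C ∈ O and every D ∈ O*, the finite sets dom(C) ∩ D⁺ and dom(C) ∩ D⁻ have the same number of elements. -/
open Set Function

variable {α : Type*}

/-- A circuit of a matroid `M`: a minimal dependent set. A cocircuit of `M` is a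
circuit of the dual matroid `M✶`. -/
def Matroid.IsMinDepCircuit (M : Matroid α) (C : Set α) : Prop := Minimal M.Dep C

/-- A signed set, encoded as an integer-valued function taking values `1` or `-1` on its
support (which plays the role of the domain of the signed set) and `0` elsewhere. -/
def IsSignedSet (g : α → ℤ) : Prop := ∀ e ∈ Function.support g, g e = 1 ∨ g e = -1

/-- A signed set is positive if it is constantly `+1` on its domain. -/
def IsPositive (g : α → ℤ) : Prop := ∀ e ∈ Function.support g, g e = 1

/-- `O` is a signature of the set-system `𝒞`: it consists of exactly two signings of each
member of `𝒞`, these two being negatives of each other, and nothing else. -/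
structure IsSignature (𝒞 : Set (Set α)) (O : Set (α → ℤ)) : Prop where
  signed : ∀ g ∈ O, IsSignedSet g
  dom_mem : ∀ g ∈ O, Function.support g ∈ 𝒞
  exists_signing : ∀ C ∈ 𝒞, ∃ g ∈ O, Function.support g = C
  neg_mem : ∀ g ∈ O, -g ∈ O
  eq_or_eq_neg : ∀ g ∈ O, ∀ h ∈ O, Function.support g = Function.support h → h = g ∨ h = -g

/-- `(M, O, Ostar)` is an oriented matroid: `O` is a signature of the circuits of `M`,
`Ostar` is a signature of the cocircuits of `M`, and orthogonality holds: whenever the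
domains of `C ∈ O` and `D ∈ Ostar` intersect, the restriction of `C` to the (finite)
intersection is neither equal to, nor the negative of, the restriction of `D`. -/
structure IsOrientation (M : Matroid α) (O Ostar : Set (α → ℤ)) : Prop where
  circuit_signature : IsSignature {C | M.IsMinDepCircuit C} O
  cocircuit_signature : IsSignature {D | M✶.IsMinDepCircuit D} Ostar
  orthogonality : ∀ C ∈ O, ∀ D ∈ Ostar,
    (Function.support C ∩ Function.support D).Nonempty →
      (¬ ∀ e ∈ Function.support C ∩ Function.support D, C e = D e) ∧
      (¬ ∀ e ∈ Function.support C ∩ Function.support D, C e = - D e)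

/-- The oriented matroid is binary: `∑_{e ∈ dom C ∩ dom D} C(e)·D(e) = 0` for every
signed circuit `C ∈ O` and signed cocircuit `D ∈ Ostar` (a finite sum, since circuits
of a finitary matroid are finite). -/
def IsBinaryOrientation (O Ostar : Set (α → ℤ)) : Prop :=
  ∀ C ∈ O, ∀ D ∈ Ostar, ∑ᶠ e, C e * D e = 0

/-- The oriented matroid is balanced: in every signed cocircuit, the set of positive
elements and the set of negative elements have the same cardinality. -/
def IsBalanced (Ostar : Set (α → ℤ)) : Prop :=
  ∀ D ∈ Ostar, Cardinal.mk {e : α | D e = 1} = Cardinal.mk {e : α | D e = -1}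

/-- If a finitary binary oriented matroid is partitioned into positive signed circuits,
then it is balanced; moreover every positive signed circuit meets the positive and the
negative parts of any signed cocircuit in the same (finite) number of elements. -/
theorem balanced_of_partition (M : Matroid α) [M.Finitary] (O Ostar : Set (α → ℤ))
    (hor : IsOrientation M O Ostar) (hbin : IsBinaryOrientation O Ostar)
    (𝒜 : Set (α → ℤ)) (h𝒜O : 𝒜 ⊆ O) (hpos : ∀ C ∈ 𝒜, IsPositive C)
    (hdisj : 𝒜.Pairwise (fun C C' => Disjoint (Function.support C) (Function.support C')))
    (hcover : ⋃ C ∈ 𝒜, Function.support C = M.E) :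
    IsBalanced Ostar ∧
    ∀ C ∈ O, IsPositive C → ∀ D ∈ Ostar,
      (Function.support C ∩ {e | D e = 1}).ncard =
        (Function.support C ∩ {e | D e = -1}).ncard := by
  have hfin : ∀ C ∈ O, (Function.support C).Finite := by
    intro C hC
    have h : M.IsCircuit (Function.support C) := hor.circuit_signature.dom_mem C hC
    exact h.finite
  have key : ∀ C ∈ O, IsPositive C → ∀ D ∈ Ostar,
      (Function.support C ∩ {e | D e = 1}).ncard =
        (Function.support C ∩ {e | D e = -1}).ncard := by
    classical
    intro C hC hCp D hD
    have hs := hbin C hC D hD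
    have hDs := hor.cocircuit_signature.signed D hD
    have hf := hfin C hC
    rw [finsum_eq_sum_of_support_subset (s := hf.toFinset) _ (by
      intro e he
      simp only [Finite.coe_toFinset]
      exact left_ne_zero_of_mul he)] at hs
    have h1 : ∀ e ∈ hf.toFinset, C e * D e =
        (if D e = 1 then (1 : ℤ) else 0) - (if D e = -1 then (1 : ℤ) else 0) := by
      intro e he
      rw [hCp e (by simpa using he), one_mul]
      by_cases h0 : D e = 0
      · simp [h0]
      · rcases hDs e h0 with h | h <;> simp [h]
    rw [Finset.sum_congr rfl h1, Finset.sum_sub_distrib, Finset.sum_boole, Finset.sum_boole] at hs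
    have e1 : ∀ z : ℤ, Function.support C ∩ {e | D e = z} =
        ((hf.toFinset.filter (fun e => D e = z) : Finset α) : Set α) := by
      intro z
      ext e
      simp
    rw [e1, e1, ncard_coe_finset, ncard_coe_finset]
    exact_mod_cast sub_eq_zero.mp hs
  refine ⟨?_, key⟩
  intro D hD
  have hsub : Function.support D ⊆ M.E := by
    have h : M✶.IsCircuit (Function.support D) := hor.cocircuit_signature.dom_mem D hD
    exact h.subset_ground
  have hU : ∀ z : ℤ, z ≠ 0 → {e | D e = z} = ⋃ C : 𝒜, (Function.support C.1 ∩ {e | D e = z}) := by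
    intro z hz
    ext e
    simp only [mem_setOf_eq, mem_iUnion, mem_inter_iff]
    constructor
    · intro h
      have he : e ∈ M.E := hsub (by simp [h, hz])
      rw [← hcover] at he
      simp only [mem_iUnion] at he
      obtain ⟨C, hC, heC⟩ := he
      exact ⟨⟨C, hC⟩, heC, h⟩
    · rintro ⟨_, _, h⟩
      exact h
  have hd : ∀ z : ℤ, Pairwise (Function.onFun Disjoint
      fun C : 𝒜 => (Function.support C.1 ∩ {e | D e = z})) := by
    intro z C C' hne
    exact (hdisj C.2 C'.2 (fun h => hne (Subtype.ext h))).mono inter_subset_left inter_subset_left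
  have hm : ∀ C : 𝒜, Nonempty (↥(Function.support C.1 ∩ {e | D e = 1}) ≃
      ↥(Function.support C.1 ∩ {e | D e = -1})) := by
    intro C
    have hf := hfin C.1 (h𝒜O C.2)
    have : Finite ↥(Function.support C.1 ∩ {e | D e = 1}) := (hf.inter_of_left _).to_subtype
    have : Finite ↥(Function.support C.1 ∩ {e | D e = -1}) := (hf.inter_of_left _).to_subtype
    exact (Finite.card_eq).mp (key C.1 (h𝒜O C.2) (hpos C.1 C.2) D hD)
  rw [hU 1 (by decide), hU (-1) (by decide)]
  refine Cardinal.mk_congr ?_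
  exact (unionEqSigmaOfDisjoint (hd 1)).trans
    ((Equiv.sigmaCongrRight fun C => (hm C).some).trans (unionEqSigmaOfDisjoint (hd (-1))).symm)
end

section
/- Deleting finitely many pairwise disjoint positive circuits preserves balancedness: let (M, O, O*) be a finitary binary balanced oriented matroid with ground set E, let 𝒜 be a finite set of positive signed circuits in O with pairwise disjoint domains, and let A be the union of their domains. Then for every D ∈ O* and every cocircuit K of the deletion M ＼ A such that K = dom(D) ∖ A, the sets {e ∈ K : D(e) = +1} and {e ∈ K : D(e) = −1} have the same cardinality. -/
open Set Function

variable {α : Type*}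

/-- The deletion `M ＼ F`: the restriction of `M` to the complement of `F`;
its circuits are exactly the circuits of `M` disjoint from `F`. -/
def Matroid.del (M : Matroid α) (F : Set α) : Matroid α := M.restrict (M.E \ F)

/-- Deleting a finite set of pairwise disjoint positive signed circuits from a finitary
binary balanced oriented matroid preserves balancedness: for every signed cocircuit
`D ∈ Ostar` and every cocircuit `K` of the deletion with `K = dom D \ A` (where `A` is
the union of the domains of the deleted circuits), `K` contains equally many positive
and negative elements of `D`. -/
theorem balanced_after_deleting_positive_circuits (M : Matroid α) [M.Finitary]
    (O Ostar : Set (α → ℤ))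
    (hor : IsOrientation M O Ostar) (hbin : IsBinaryOrientation O Ostar)
    (hbal : IsBalanced Ostar)
    (𝒜 : Set (α → ℤ)) (hfin : 𝒜.Finite) (h𝒜O : 𝒜 ⊆ O) (hpos : ∀ C ∈ 𝒜, IsPositive C)
    (hdisj : 𝒜.Pairwise (fun C C' => Disjoint (Function.support C) (Function.support C'))) :
    ∀ D ∈ Ostar, ∀ K : Set α,
      (M.del (⋃ C ∈ 𝒜, Function.support C))✶.IsMinDepCircuit K →
      K = Function.support D \ (⋃ C ∈ 𝒜, Function.support C) →
      Cardinal.mk {e : α | e ∈ K ∧ D e = 1} = Cardinal.mk {e : α | e ∈ K ∧ D e = -1} := by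
  intro D hD K _ hK
  set A : Set α := ⋃ C ∈ 𝒜, Function.support C with hA
  have hcf : ∀ C ∈ 𝒜, (Function.support C).Finite := by
    intro C hC
    have h : M.IsCircuit (Function.support C) := hor.circuit_signature.dom_mem C (h𝒜O hC)
    exact h.finite
  have hAf : A.Finite := hfin.biUnion hcf
  have hsum : ∑ᶠ e ∈ A, D e = 0 := by
    rw [hA, finsum_mem_biUnion (fun C hC C' hC' hne => hdisj hC hC' hne) hfin hcf]
    rw [finsum_mem_congr rfl (g := fun _ => (0 : ℤ)), finsum_mem_zero]
    intro C hC
    rw [← hbin C (h𝒜O hC) D hD]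
    refine finsum_congr fun e => ?_
    by_cases he : e ∈ Function.support C
    · simp [he, hpos C hC e he]
    · have h0 : C e = 0 := by simpa using he
      simp [h0]
  have hsg := hor.cocircuit_signature.signed D hD
  have hcard : (hAf.toFinset.filter (fun e => D e = 1)).card
      = (hAf.toFinset.filter (fun e => D e = -1)).card := by
    rw [finsum_mem_eq_finite_toFinset_sum _ hAf] at hsum
    have h1 : ∀ e, D e = (if D e = 1 then 1 else 0) - (if D e = -1 then 1 else 0) := by
      intro e
      by_cases he : D e = 0
      · simp [he]
      · rcases hsg e he with h | h <;> simp [h]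
    rw [Finset.sum_congr rfl (fun e _ => h1 e), Finset.sum_sub_distrib,
      Finset.sum_boole, Finset.sum_boole] at hsum
    exact_mod_cast sub_eq_zero.mp hsum
  have key : ∀ z : ℤ, z ≠ 0 → Cardinal.mk {e : α | D e = z}
      = Cardinal.mk {e : α | e ∈ K ∧ D e = z}
        + ((hAf.toFinset.filter (fun e => D e = z)).card : Cardinal) := by
    intro z hz
    rw [← Cardinal.mk_coe_finset]
    change _ = _ + Cardinal.mk
      (((hAf.toFinset.filter (fun e => D e = z) : Finset α) : Set α) : Type _)
    rw [← Cardinal.mk_union_of_disjoint]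
    · congr 2
      ext e
      by_cases heA : e ∈ A
      · simp [hK, heA]
      · simp only [hK, Set.mem_union, Set.mem_setOf_eq, Set.mem_diff, Function.mem_support]
        simp only [Finset.coe_filter, Set.Finite.mem_toFinset, Set.mem_setOf_eq, heA]
        grind
    · rw [Set.disjoint_left]
      intro e he he'
      simp only [Finset.coe_filter, Set.Finite.mem_toFinset, Set.mem_setOf_eq] at he he'
      have := he.1
      rw [hK] at this
      exact this.2 he'.1
  have hb := hbal D hD
  rw [key 1 (by norm_num), key (-1) (by norm_num), hcard] at hb
  exact Cardinal.eq_of_add_eq_add_right hb (Cardinal.natCast_lt_aleph0)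
end

section
/- Every finitary binary balanced oriented matroid with countable ground set can be partitioned into directed circuits: if (M, O, O*) is a finitary binary oriented matroid that is balanced and whose ground set E is countable, then there is a set 𝒜 of positive signed circuits in O whose domains are pairwise disjoint and whose domains have union E. -/
open Set Function

variable {α : Type*}

/-- If all products are nonnegative and the sum vanishes, each product vanishes. -/
lemma cbp_term_zero {C D : α → ℤ} (hC : (support C).Finite) (hs : ∑ᶠ e, C e * D e = 0)
    (hn : ∀ x, 0 ≤ C x * D x) (e : α) : C e * D e = 0 := by
  have hsub : support (fun e => C e * D e) ⊆ ↑(hC.toFinset) := by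
    intro x hx
    simp only [mem_support, Set.Finite.coe_toFinset] at hx ⊢
    exact left_ne_zero_of_mul hx
  rw [finsum_eq_sum_of_support_subset _ hsub] at hs
  by_cases he : C e = 0
  · simp [he]
  · exact (Finset.sum_eq_zero_iff_of_nonneg (fun x _ => hn x)).1 hs e (by simpa using he)

lemma cbp_base (M : Matroid α) {O Ostar : Set (α → ℤ)} (hor : IsOrientation M O Ostar)
    (G : Set α) (e : α) (he : e ∈ M.E) (heG : e ∉ G) :
    (∃ C ∈ O, C e = 1 ∧ support C ⊆ insert e G) ∨
    (∃ D ∈ Ostar, D e = 1 ∧ ∀ g ∈ G, D g = 0) := by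
  by_cases hcl : e ∈ M.closure G
  · left
    obtain ⟨C, hCs, hC, heC⟩ := Matroid.exists_isCircuit_of_mem_closure hcl heG
    obtain ⟨g, hg, rfl⟩ := hor.circuit_signature.exists_signing C hC
    rcases hor.circuit_signature.signed g hg e heC with h | h
    · exact ⟨g, hg, h, hCs⟩
    · exact ⟨-g, hor.circuit_signature.neg_mem g hg, by simp [h], by simpa using hCs⟩
  · right
    obtain ⟨I, hI⟩ := M.exists_isBasis' G
    have heI : e ∉ I := fun h => heG (hI.subset h)
    have hins : M.Indep (insert e I) := by
      rw [hI.indep.insert_indep_iff_of_notMem heI]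
      exact ⟨he, by rwa [hI.closure_eq_closure]⟩
    obtain ⟨B, hB, hIB⟩ := hins.exists_isBase_superset
    have heB : e ∈ B := hIB (mem_insert _ _)
    have hK := hB.compl_closure_sdiff_singleton_isCocircuit heB
    have heK : e ∈ M.E \ M.closure (B \ {e}) :=
      ⟨he, hB.indep.notMem_closure_sdiff_of_mem heB⟩
    have hGK : ∀ g ∈ G, g ∉ M.E \ M.closure (B \ {e}) := by
      rintro g hg ⟨hgE, hgc⟩
      apply hgc
      have h1 : g ∈ M.closure G := M.mem_closure_of_mem' hg hgE
      rw [← hI.closure_eq_closure] at h1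
      refine M.closure_subset_closure ?_ h1
      intro x hx
      exact ⟨hIB (mem_insert_of_mem _ hx), fun h => heI (by rw [← mem_singleton_iff.1 h]; exact hx)⟩
    obtain ⟨g, hg, hgs⟩ := hor.cocircuit_signature.exists_signing _ hK
    rw [← hgs] at heK hGK
    rcases hor.cocircuit_signature.signed g hg e heK with h | h
    · exact ⟨g, hg, h, fun x hx => by simpa using hGK x hx⟩
    · exact ⟨-g, hor.cocircuit_signature.neg_mem g hg, by simp [h],
        fun x hx => by simpa using hGK x hx⟩

section
variable {O Ostar : Set (α → ℤ)} {e : α}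

/-- Farkas with finitely many black elements. -/
lemma cbp_finite
    (hbase : ∀ G : Set α, e ∉ G → (∃ C ∈ O, C e = 1 ∧ support C ⊆ insert e G) ∨
      (∃ D ∈ Ostar, D e = 1 ∧ ∀ g ∈ G, D g = 0))
    (hfin : ∀ C ∈ O, (support C).Finite)
    (hbin : IsBinaryOrientation O Ostar) (X : Set α) (hX : X.Finite) :
    ∀ G : Set α, e ∉ G → e ∉ X →
      (∃ C ∈ O, C e = 1 ∧ support C ⊆ insert e (X ∪ G) ∧ ∀ x ∈ X, x ∉ G → 0 ≤ C x) ∨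
      (∃ D ∈ Ostar, D e = 1 ∧ (∀ g ∈ G, D g = 0) ∧ ∀ x ∈ X, 0 ≤ D x) := by
  induction X, hX using Set.Finite.induction_on with
  | empty =>
    intro G heG _
    rcases hbase G heG with ⟨C, h1, h2, h3⟩ | ⟨D, h1, h2, h3⟩
    · exact Or.inl ⟨C, h1, h2, by simpa using h3, by simp⟩
    · exact Or.inr ⟨D, h1, h2, h3, by simp⟩
  | @insert b X hb _ ih =>
    intro G heG heX
    have heb : e ≠ b := fun h => heX (h ▸ mem_insert _ _)
    have heX' : e ∉ X := fun h => heX (mem_insert_of_mem _ h)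
    rcases ih (insert b G) (by simp [heb, heG]) heX' with ⟨C, hC, hCe, hCs, hCp⟩ | ⟨D, hD, hDe, hDG, hDp⟩
    swap
    · refine Or.inr ⟨D, hD, hDe, fun g hg => hDG g (mem_insert_of_mem _ hg), ?_⟩
      rintro x (rfl | hx)
      · exact (hDG x (mem_insert _ _)).ge
      · exact hDp x hx
    rcases ih G heG heX' with ⟨C', hC', hCe', hCs', hCp'⟩ | ⟨D, hD, hDe, hDG, hDp⟩
    · refine Or.inl ⟨C', hC', hCe', hCs'.trans (by grind), ?_⟩
      rintro x (rfl | hx) hxG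
      · by_contra hlt
        have : x ∈ support C' := by simp only [mem_support]; omega
        have := hCs' this
        grind
      · exact hCp' x hx hxG
    by_cases hbG : b ∈ G
    · refine Or.inr ⟨D, hD, hDe, hDG, ?_⟩
      rintro x (rfl | hx)
      · exact (hDG x hbG).ge
      · exact hDp x hx
    by_cases hCb : 0 ≤ C b
    · refine Or.inl ⟨C, hC, hCe, hCs.trans (by grind), ?_⟩
      rintro x (rfl | hx) hxG
      · exact hCb
      · by_cases hxb : x = b
        · rwa [hxb]
        · exact hCp x hx (by grind)
    by_cases hDb : 0 ≤ D b
    · refine Or.inr ⟨D, hD, hDe, hDG, ?_⟩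
      rintro x (rfl | hx)
      · exact hDb
      · exact hDp x hx
    exfalso
    have := cbp_term_zero (hfin C hC) (hbin C hC D hD) (fun x => ?_) e
    · simp [hCe, hDe] at this
    · by_cases hx : C x = 0
      · simp [hx]
      have hx' := hCs hx
      by_cases hxe : x = e
      · simp [hxe, hCe, hDe]
      by_cases hxb : x = b
      · subst hxb; exact mul_nonneg_of_nonpos_of_nonpos (by omega) (by omega)
      by_cases hxG : x ∈ G
      · simp [hDG x hxG]
      have hxX : x ∈ X := by grind
      exact mul_nonneg (hCp x hxX (by grind)) (hDp x hxX)

lemma cbp_farkas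
    (hbase : ∀ G : Set α, e ∉ G → (∃ C ∈ O, C e = 1 ∧ support C ⊆ insert e G) ∨
      (∃ D ∈ Ostar, D e = 1 ∧ ∀ g ∈ G, D g = 0))
    (hfin : ∀ C ∈ O, (support C).Finite)
    (hsO : ∀ C ∈ O, IsSignedSet C) (hsD : ∀ D ∈ Ostar, IsSignedSet D)
    (hbin : IsBinaryOrientation O Ostar) (U : Set α) (heU : e ∉ U) :
    (∃ C ∈ O, C e = 1 ∧ support C ⊆ insert e U ∧ ∀ x ∈ U, 0 ≤ C x) ∨
    (∃ D ∈ Ostar, D e = 1 ∧ ∀ x ∈ U, 0 ≤ D x) := by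
  by_contra hcon
  push Not at hcon
  obtain ⟨hnc, hnd⟩ := hcon
  let S : Set (Set α) := {G | G ⊆ U ∧
    ¬ ∃ C ∈ O, C e = 1 ∧ support C ⊆ insert e U ∧ ∀ x ∈ U, x ∉ G → 0 ≤ C x}
  obtain ⟨G, -, hGmax⟩ := zorn_subset_nonempty S (by
    intro c hcS hchain hne
    refine ⟨⋃₀ c, ⟨sUnion_subset fun s hs => (hcS hs).1, ?_⟩, fun s hs => subset_sUnion_of_mem hs⟩
    rintro ⟨C, hC, hCe, hCs, hCp⟩
    obtain ⟨t, htc, ht⟩ := DirectedOn.exists_mem_subset_of_finite_of_subset_sUnion hne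
      hchain.directedOn ((hfin C hC).inter_of_left (⋃₀ c)) inter_subset_right
    refine (hcS htc).2 ⟨C, hC, hCe, hCs, fun x hx hxt => ?_⟩
    by_cases hxc : x ∈ ⋃₀ c
    · have : C x = 0 := by
        by_contra h
        exact hxt (ht ⟨h, hxc⟩)
      exact this.ge
    · exact hCp x hx hxc) ∅ ⟨empty_subset _, by
      rintro ⟨C, hC, hCe, hCs, hCp⟩
      obtain ⟨x, hx, hlt⟩ := hnc C hC hCe hCs
      have := hCp x hx (by simp)
      omega⟩
  obtain ⟨hGU, hGfree⟩ := hGmax.prop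
  have heG : e ∉ G := fun h => heU (hGU h)
  -- the circuits through the black elements
  have hCb : ∀ b ∈ U, b ∉ G → ∃ C ∈ O, C e = 1 ∧ support C ⊆ insert e U ∧ C b < 0 ∧
      ∀ x ∈ U, x ∉ G → x ≠ b → 0 ≤ C x := by
    intro b hbU hbG
    have hnot : insert b G ∉ S := fun h =>
      hbG (hGmax.le_of_ge h (subset_insert _ _) (mem_insert _ _))
    have : ∃ C ∈ O, C e = 1 ∧ support C ⊆ insert e U ∧ ∀ x ∈ U, x ∉ insert b G → 0 ≤ C x := by
      by_contra h
      exact hnot ⟨insert_subset hbU hGU, h⟩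
    obtain ⟨C, hC, hCe, hCs, hCp⟩ := this
    refine ⟨C, hC, hCe, hCs, ?_, fun x hx hxG hxb => hCp x hx (by simp [hxb, hxG])⟩
    by_contra hlt
    refine hGfree ⟨C, hC, hCe, hCs, fun x hx hxG => ?_⟩
    by_cases hxb : x = b
    · rw [hxb]; omega
    · exact hCp x hx (by simp [hxb, hxG])
  have hDX : ∀ X : Set α, X.Finite → X ⊆ U → ∃ D ∈ Ostar, D e = 1 ∧ (∀ g ∈ G, D g = 0) ∧
      ∀ x ∈ X, 0 ≤ D x := by
    intro X hX hXU
    refine (cbp_finite hbase hfin hbin X hX G heG (fun h => heU (hXU h))).resolve_left ?_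
    rintro ⟨C, hC, hCe, hCs, hCp⟩
    refine hGfree ⟨C, hC, hCe, hCs.trans (insert_subset_insert (union_subset hXU hGU)),
      fun x hx hxG => ?_⟩
    by_cases hxX : x ∈ X
    · exact hCp x hxX hxG
    · have : C x = 0 := by
        by_contra h
        have := hCs h
        have : x ≠ e := fun h => heU (h ▸ hx)
        grind
      exact this.ge
  -- each black element is parallel to `e` modulo `G`
  have hpar : ∀ b ∈ U, b ∉ G → ∃ C ∈ O, C e = 1 ∧ support C ⊆ insert e U ∧ C b < 0 ∧
      ∀ x ∈ U, x ∉ G → x ≠ b → C x = 0 := by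
    intro b hbU hbG
    obtain ⟨C, hC, hCe, hCs, hCbn, hCp⟩ := hCb b hbU hbG
    refine ⟨C, hC, hCe, hCs, hCbn, fun p hpU hpG hpb => ?_⟩
    by_contra hp0
    have hCpp := hCp p hpU hpG hpb
    obtain ⟨C', hC', hCe', hCs', hCbn', hCp'⟩ := hCb p hpU hpG
    obtain ⟨D, hD, hDe, hDG, hDp⟩ := hDX ((support C ∪ support C') ∩ U)
      (((hfin C hC).union (hfin C' hC')).inter_of_left U) inter_subset_right
    have hDpp : 0 < D p := by
      by_contra hle
      have h0 := hDp p ⟨Or.inl hp0, hpU⟩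
      have hDp0 : D p = 0 := by omega
      have := cbp_term_zero (hfin C' hC') (hbin C' hC' D hD) (fun x => ?_) e
      · simp [hCe', hDe] at this
      · by_cases hx : C' x = 0
        · simp [hx]
        by_cases hxe : x = e
        · simp [hxe, hCe', hDe]
        by_cases hxp : x = p
        · simp [hxp, hDp0]
        by_cases hxG : x ∈ G
        · simp [hDG x hxG]
        have hxU : x ∈ U := (hCs' hx).resolve_left hxe
        exact mul_nonneg (hCp' x hxU hxG hxp) (hDp x ⟨Or.inr hx, hxU⟩)
    have hs := hbin C hC D hD
    have hsub : support (fun e => C e * D e) ⊆ ↑((hfin C hC).toFinset) := by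
      intro x hx
      simp only [mem_support, Set.Finite.coe_toFinset] at hx ⊢
      exact left_ne_zero_of_mul hx
    rw [finsum_eq_sum_of_support_subset _ hsub] at hs
    classical
    have hbmem : b ∈ (hfin C hC).toFinset := by simp; omega
    rw [← Finset.add_sum_erase _ _ hbmem] at hs
    have hep : e ≠ p := fun h => heU (h ▸ hpU)
    have heb : e ≠ b := fun h => heU (h ▸ hbU)
    have hle : ∑ x ∈ ({e, p} : Finset α), C x * D x ≤
        ∑ x ∈ (hfin C hC).toFinset.erase b, C x * D x := by
      apply Finset.sum_le_sum_of_subset_of_nonneg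
      · intro x hx
        simp only [Finset.mem_insert, Finset.mem_singleton] at hx
        rcases hx with rfl | rfl
        · simp [heb, hCe]
        · simp [hpb, hp0]
      · intro x hx _
        simp only [Finset.mem_erase, Set.Finite.mem_toFinset] at hx
        by_cases hxe : x = e
        · simp [hxe, hCe, hDe]
        by_cases hxG : x ∈ G
        · simp [hDG x hxG]
        have hxU : x ∈ U := (hCs hx.2).resolve_left hxe
        exact mul_nonneg (hCp x hxU hxG hx.1) (hDp x ⟨Or.inl hx.2, hxU⟩)
    rw [Finset.sum_pair hep, hCe, hDe] at hle
    have h1 : C p = 1 := by rcases hsO C hC p hp0 with h | h <;> omega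
    have h2 : D p = 1 := by
      rcases hsD D hD p (by simp only [mem_support]; omega) with h | h <;> omega
    have h3 : C b = -1 := by
      rcases hsO C hC b (by simp only [mem_support]; omega) with h | h <;> omega
    have h4 : D b ≤ 1 := by
      by_cases hb0 : D b = 0
      · omega
      rcases hsD D hD b hb0 with h | h <;> omega
    rw [h1, h2] at hle
    rw [h3] at hs
    linarith
  obtain ⟨D, hD, hDe, hDG, -⟩ := hDX ∅ finite_empty (empty_subset _)
  obtain ⟨b, hbU, hDb⟩ := hnd D hD hDe
  have hbG : b ∉ G := fun h => by have := hDG b h; omega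
  obtain ⟨C, hC, hCe, hCs, hCbn, hCp⟩ := hpar b hbU hbG
  have := cbp_term_zero (hfin C hC) (hbin C hC D hD) (fun x => ?_) e
  · simp [hCe, hDe] at this
  · by_cases hx : C x = 0
    · simp [hx]
    by_cases hxe : x = e
    · simp [hxe, hCe, hDe]
    by_cases hxb : x = b
    · subst hxb; exact mul_nonneg_of_nonpos_of_nonpos (by omega) (by omega)
    by_cases hxG : x ∈ G
    · simp [hDG x hxG]
    have hxU : x ∈ U := (hCs hx).resolve_left hxe
    exact absurd (hCp x hxU hxG hxb) hx
end

/-- In a balanced signature, a finite signed cocircuit has total sum zero. -/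
lemma cbp_balanced_sum {D : α → ℤ} (hs : IsSignedSet D)
    (hb : Cardinal.mk {e : α | D e = 1} = Cardinal.mk {e : α | D e = -1})
    (hn : {e : α | D e = -1}.Finite) :
    ∃ T : Finset α, support D ⊆ T ∧ ∑ x ∈ T, D x = 0 := by
  classical
  have hp : {e : α | D e = 1}.Finite := by
    rw [← Cardinal.lt_aleph0_iff_set_finite] at hn ⊢
    rwa [hb]
  have hcard : hp.toFinset.card = hn.toFinset.card := by
    have h1 := congrArg Cardinal.toNat hb
    rw [← Set.ncard_eq_toFinset_card _ hp, ← Set.ncard_eq_toFinset_card _ hn]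
    exact h1
  refine ⟨hp.toFinset ∪ hn.toFinset, ?_, ?_⟩
  · intro x hx
    simpa using hs x hx
  · rw [Finset.sum_union]
    · rw [Finset.sum_congr rfl (g := fun _ => (1 : ℤ)) (fun x hx => by simpa using hx),
        Finset.sum_congr rfl (s₁ := hn.toFinset) (g := fun _ => (-1 : ℤ))
          (fun x hx => by simpa using hx)]
      simp [hcard]
    · rw [Finset.disjoint_left]
      intro x hx hx'
      simp only [Set.Finite.mem_toFinset, mem_ofPred_eq] at hx hx'
      omega

/-- A finite partial partition into positive circuits. -/
def CbpGood (O : Set (α → ℤ)) (A : Finset (α → ℤ)) : Prop :=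
  (A : Set (α → ℤ)) ⊆ O ∧ (∀ C ∈ A, IsPositive C) ∧
    (A : Set (α → ℤ)).Pairwise (fun C C' => Disjoint (support C) (support C'))

lemma cbp_step (M : Matroid α) [M.Finitary] (O Ostar : Set (α → ℤ))
    (hor : IsOrientation M O Ostar) (hbin : IsBinaryOrientation O Ostar)
    (hbal : IsBalanced Ostar) (A : Finset (α → ℤ)) (hA : CbpGood O A) (e : α) :
    ∃ A' : Finset (α → ℤ), A ⊆ A' ∧ CbpGood O A' ∧ (e ∈ M.E → ∃ C ∈ A', e ∈ support C) := by
  classical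
  by_cases heE : e ∈ M.E
  swap
  · exact ⟨A, Finset.Subset.refl _, hA, fun h => absurd h heE⟩
  by_cases heA : ∃ C ∈ A, e ∈ support C
  · exact ⟨A, Finset.Subset.refl _, hA, fun _ => heA⟩
  obtain ⟨hAO, hApos, hAdis⟩ := hA
  have hfin : ∀ C ∈ O, (support C).Finite := fun C hC =>
    Matroid.IsCircuit.finite (M := M) (hor.circuit_signature.dom_mem C hC)
  let U : Set α := {x | x ∈ M.E ∧ x ≠ e ∧ ¬ ∃ C ∈ A, x ∈ support C}
  rcases cbp_farkas (e := e) (fun G hG => cbp_base M hor G e heE hG) hfin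
    hor.circuit_signature.signed hor.cocircuit_signature.signed hbin U (fun h => h.2.1 rfl) with
    ⟨C, hC, hCe, hCs, hCp⟩ | ⟨D, hD, hDe, hDp⟩
  · have hoff : ∀ x ∈ support C, ¬ ∃ C' ∈ A, x ∈ support C' := by
      intro x hx
      rcases hCs hx with rfl | hxU
      · exact heA
      · exact hxU.2.2
    refine ⟨insert C A, Finset.subset_insert _ _, ⟨?_, ?_, ?_⟩, fun _ =>
      ⟨C, Finset.mem_insert_self _ _, by simp [hCe]⟩⟩
    · rw [Finset.coe_insert]; exact insert_subset hC hAO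
    · intro C' hC'
      rcases Finset.mem_insert.1 hC' with rfl | h
      · intro x hx
        rcases hCs hx with rfl | hxU
        · exact hCe
        · have := hCp x hxU
          rcases hor.circuit_signature.signed _ hC x hx with h | h
          · exact h
          · omega
      · exact hApos C' h
    · rw [Finset.coe_insert]
      refine hAdis.insert ?_
      intro C' hC' _
      have hd : Disjoint (support C) (support C') := by
        rw [Set.disjoint_left]
        exact fun x hx hx' => hoff x hx ⟨C', hC', hx'⟩
      exact ⟨hd, hd.symm⟩
  · exfalso
    have hDE : support D ⊆ M.E :=
      Matroid.IsCocircuit.subset_ground (M := M) (hor.cocircuit_signature.dom_mem D hD)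
    have hDoff : ∀ x, (¬ ∃ C ∈ A, x ∈ support C) → 0 ≤ D x := by
      intro x hx
      by_cases hxe : x = e
      · rw [hxe, hDe]; exact zero_le_one
      by_cases h0 : D x = 0
      · exact h0.ge
      exact hDp x ⟨hDE h0, hxe, hx⟩
    have hnfin : {x : α | D x = -1}.Finite := by
      refine Set.Finite.subset (s := ⋃ C ∈ A, support C)
        (A.finite_toSet.biUnion (fun C hC => hfin C (hAO hC))) ?_
      intro x hx
      by_contra h
      have h' := hDoff x (by simpa using h)
      simp only [mem_ofPred_eq] at hx
      omega
    obtain ⟨T, hT, hTs⟩ := cbp_balanced_sum (hor.cocircuit_signature.signed D hD) (hbal D hD) hnfin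
    have hzero : ∑ x ∈ T, D x * (1 - ∑ C ∈ A, C x) = 0 := by
      simp only [mul_sub, mul_one, Finset.sum_sub_distrib, hTs, Finset.mul_sum]
      rw [Finset.sum_comm, Finset.sum_eq_zero, sub_zero]
      intro C hC
      rw [← hbin C (hAO hC) D hD, finsum_eq_sum_of_support_subset (s := T)]
      · exact Finset.sum_congr rfl (fun x _ => mul_comm _ _)
      · intro x hx
        exact hT (right_ne_zero_of_mul hx)
    have hnn : ∀ x ∈ T, 0 ≤ D x * (1 - ∑ C ∈ A, C x) := by
      intro x _
      by_cases hx : ∃ C ∈ A, x ∈ support C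
      · obtain ⟨C, hC, hxC⟩ := hx
        rw [Finset.sum_eq_single_of_mem C hC, hApos C hC x hxC]
        · simp
        · intro C' hC' hne
          by_contra h0
          exact Set.disjoint_left.1 (hAdis hC' hC hne) h0 hxC
      · rw [Finset.sum_eq_zero]
        · simpa using hDoff x hx
        · intro C hC
          by_contra h0
          exact hx ⟨C, hC, h0⟩
    have := (Finset.sum_eq_zero_iff_of_nonneg hnn).1 hzero e (hT (by simp [hDe]))
    rw [Finset.sum_eq_zero, hDe] at this
    · simp at this
    · intro C hC
      by_contra h0
      exact heA ⟨C, hC, h0⟩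

/-- Every finitary binary balanced oriented matroid with countable ground set can be
partitioned into directed circuits: there is a set of positive signed circuits whose
domains are pairwise disjoint with union the ground set. -/
theorem countable_balanced_partition (M : Matroid α) [M.Finitary]
    (O Ostar : Set (α → ℤ))
    (hor : IsOrientation M O Ostar) (hbin : IsBinaryOrientation O Ostar)
    (hbal : IsBalanced Ostar) (hcount : M.E.Countable) :
    ∃ 𝒜 ⊆ O, (∀ C ∈ 𝒜, IsPositive C) ∧
      𝒜.Pairwise (fun C C' => Disjoint (Function.support C) (Function.support C')) ∧
      ⋃ C ∈ 𝒜, Function.support C = M.E := by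
  classical
  rcases M.E.eq_empty_or_nonempty with hE | hE
  · exact ⟨∅, empty_subset _, by simp, by simp, by simp [hE]⟩
  obtain ⟨f, hf⟩ := hcount.exists_eq_range hE
  choose! N hN1 hN2 hN3 using cbp_step M O Ostar hor hbin hbal
  let a : ℕ → Finset (α → ℤ) := fun n => Nat.rec ∅ (fun n A => N A (f n)) n
  have ha : ∀ n, CbpGood O (a n) := by
    intro n
    induction n with
    | zero => exact ⟨by simp [a], by simp [a], by simp [a]⟩
    | succ n ih => exact hN2 _ ih (f n)
  have hmono : Monotone a := monotone_nat_of_le_succ fun n => hN1 _ (ha n) (f n)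
  let b : ℕ → Set (α → ℤ) := fun n => {C | C ∈ a n}
  refine ⟨⋃ n : ℕ, b n, iUnion_subset (fun n => (ha n).1), ?_, ?_, ?_⟩
  · intro C hC
    obtain ⟨n, hn⟩ := mem_iUnion.1 hC
    exact (ha n).2.1 C hn
  · rw [Set.pairwise_iUnion]
    · exact fun n => (ha n).2.2
    · exact Monotone.directed_le (f := b) (fun i j hij C hC => hmono hij hC)
  · apply Subset.antisymm
    · refine iUnion₂_subset fun C hC => ?_
      obtain ⟨n, hn⟩ := mem_iUnion.1 hC
      exact Matroid.IsCircuit.subset_ground (M := M)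
        (hor.circuit_signature.dom_mem C ((ha n).1 hn))
    · intro x hx
      obtain ⟨n, rfl⟩ : x ∈ range f := hf ▸ hx
      obtain ⟨C, hC, hxC⟩ := hN3 (a n) (ha n) (f n) hx
      exact mem_iUnion₂.2 ⟨C, mem_iUnion.2 ⟨n + 1, hC⟩, hxC⟩
end
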